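/- Let G be a topological group, e its identity, and for p ∈ G let Ω_p denote the space of admissible paths from e to p in a step-two Carnot group (paths γ : [0,2π] → G with γ(0)=e, γ(2π)=p, absolutely continuous with L² derivative tangent to the distribution), with the L² topology on controls. Then for any p₁, p₂ ∈ G, the spaces Ω_{p₁} and Ω_{p₂} are homotopy equivalent; moreover Ω_e is contractible, hence every Ω_p is contractible. -/

import Mathlib

open Matrix MeasureTheory Real

open Set Filter Topology unitInterval

section Reparametrization

variable {E : Type*} [NormedAddCommGroup E] {T : ℝ}

/-- The space of `L²` controls on `(0, T]`. -/
abbrev ControlSpace (E : Type*) [NormedAddCommGroup E] (T : ℝ) : Type _ :=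
  Lp E 2 (volume.restrict (Ioc (0 : ℝ) T))

/-- The extension of a control by zero to the whole line. -/
noncomputable def zeroExtend (u : ControlSpace E T) : ℝ → E := (Ioc (0 : ℝ) T).indicator u

lemma memLp_zeroExtend (u : ControlSpace E T) : MemLp (zeroExtend u) 2 volume :=
  (memLp_indicator_iff_restrict measurableSet_Ioc).2 (Lp.memLp u)

lemma zeroExtend_ae_eq (u : ControlSpace E T) :
    zeroExtend u =ᵐ[volume.restrict (Ioc (0 : ℝ) T)] u :=
  indicator_ae_eq_restrict measurableSet_Ioc

variable [NormedSpace ℝ E]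

/-- Speeding up a function on the line by the factor `1 + s`. -/
def speedUp (s : I) (h : ℝ → E) : ℝ → E := fun t => (1 + s : ℝ) • h ((1 + s : ℝ) * t)

lemma one_add_unitInterval_pos (s : I) : (0 : ℝ) < 1 + s := by
  linarith [s.2.1]

lemma quasiMeasurePreserving_mul_left {c : ℝ} (hc : c ≠ 0) :
    Measure.QuasiMeasurePreserving (fun t : ℝ => c * t) volume volume :=
  ⟨measurable_const_mul c, by
    rw [Real.map_volume_mul_left hc]; exact Measure.smul_absolutelyContinuous⟩

lemma aestronglyMeasurable_speedUp (s : I) {h : ℝ → E} (hh : AEStronglyMeasurable h volume) :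
    AEStronglyMeasurable (speedUp s h) volume :=
  (hh.comp_quasiMeasurePreserving
    (quasiMeasurePreserving_mul_left (one_add_unitInterval_pos s).ne')).const_smul _

lemma eLpNorm_speedUp_le (s : I) {h : ℝ → E} (hh : AEStronglyMeasurable h volume) :
    eLpNorm (speedUp s h) 2 volume ≤ 2 * eLpNorm h 2 volume := by
  have hs := one_add_unitInterval_pos s
  have hs' : (1 + s : ℝ) ≤ 2 := by linarith [s.2.2]
  have hmap := Real.map_volume_mul_left hs.ne'
  have key : eLpNorm (fun t => h ((1 + s : ℝ) * t)) 2 volume ≤ eLpNorm h 2 volume := by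
    have h1 := eLpNorm_map_measure (p := 2) (g := h) (f := fun t : ℝ => (1 + s : ℝ) * t)
      (μ := volume) (hh.mono_ac (quasiMeasurePreserving_mul_left hs.ne').2)
      (measurable_const_mul _).aemeasurable
    rw [hmap, eLpNorm_smul_measure_of_ne_top (by simp)] at h1
    change eLpNorm (h ∘ fun t : ℝ => (1 + s : ℝ) * t) 2 volume ≤ _
    rw [← h1, smul_eq_mul]
    refine mul_le_of_le_one_left' (ENNReal.rpow_le_one ?_ (by positivity))
    rw [ENNReal.ofReal_le_one, abs_of_pos (by positivity)]
    exact inv_le_one_of_one_le₀ (by linarith [s.2.1])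
  have h2 : speedUp s h = (1 + s : ℝ) • fun t => h ((1 + s : ℝ) * t) := rfl
  rw [h2, eLpNorm_const_smul]
  gcongr
  rw [Real.enorm_eq_ofReal hs.le]
  exact (ENNReal.ofReal_le_ofReal hs').trans (by simp)

lemma memLp_speedUp (s : I) {h : ℝ → E} (hh : MemLp h 2 volume) :
    MemLp (speedUp s h) 2 volume :=
  ⟨aestronglyMeasurable_speedUp s hh.1,
    (eLpNorm_speedUp_le s hh.1).trans_lt (ENNReal.mul_lt_top (by simp) hh.2)⟩

lemma eLpNorm_speedUp_sub_speedUp_le (s : I) {h k : ℝ → E} (hh : AEStronglyMeasurable h volume)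
    (hk : AEStronglyMeasurable k volume) :
    eLpNorm (speedUp s h - speedUp s k) 2 volume ≤ 2 * eLpNorm (h - k) 2 volume := by
  convert eLpNorm_speedUp_le s (hh.sub hk) using 2
  ext t
  simp [speedUp, smul_sub]

/-- The reparametrization of a control that runs it at speed `1 + s` and then stops. -/
noncomputable def reparam (s : I) (u : ControlSpace E T) : ControlSpace E T :=
  ((memLp_speedUp s (memLp_zeroExtend u)).restrict _).toLp (speedUp s (zeroExtend u))

lemma reparam_ae_eq (s : I) (u : ControlSpace E T) :
    reparam s u =ᵐ[volume.restrict (Ioc (0 : ℝ) T)] speedUp s (zeroExtend u) :=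
  MemLp.coeFn_toLp _

lemma reparam_zero (u : ControlSpace E T) : reparam 0 u = u := by
  refine Lp.ext ((reparam_ae_eq 0 u).trans ?_)
  have h : speedUp 0 (zeroExtend u) = zeroExtend u := by ext; simp [speedUp]
  rw [h]
  exact zeroExtend_ae_eq u

lemma lipschitzWith_reparam (s : I) :
    LipschitzWith 2 (reparam s : ControlSpace E T → ControlSpace E T) := by
  intro u v
  rw [reparam, reparam, Lp.edist_toLp_toLp]
  refine (eLpNorm_mono_measure _ Measure.restrict_le_self).trans
    ((eLpNorm_speedUp_sub_speedUp_le s (memLp_zeroExtend u).1 (memLp_zeroExtend v).1).trans ?_)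
  rw [Lp.edist_def, zeroExtend, zeroExtend, ← indicator_sub',
    eLpNorm_indicator_eq_eLpNorm_restrict measurableSet_Ioc]
  rfl

lemma eventually_eLpNorm_speedUp_sub_lt {g : ℝ → E} (hg : Continuous g) (T : ℝ) (s₀ : I)
    {ε : ENNReal} (hε : ε ≠ 0) :
    ∀ᶠ s in 𝓝 s₀, eLpNorm (speedUp s g - speedUp s₀ g) 2 (volume.restrict (Ioc (0 : ℝ) T)) < ε := by
  set μ := volume.restrict (Ioc (0 : ℝ) T)
  obtain ⟨δ, hδ, hδε⟩ : ∃ δ : ℝ, 0 < δ ∧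
      μ univ ^ (2 : ENNReal).toReal⁻¹ * ENNReal.ofReal δ < ε := by
    have hC : μ univ ^ (2 : ENNReal).toReal⁻¹ ≠ ⊤ :=
      ENNReal.rpow_ne_top_of_nonneg (by positivity) (measure_ne_top _ _)
    obtain ⟨δ, h1, h2⟩ := ENNReal.exists_nnreal_pos_mul_lt hC hε
    exact ⟨δ, h1, by rwa [ENNReal.ofReal_coe_nnreal, mul_comm]⟩
  have hcont : Continuous fun z : I × ℝ => ‖speedUp z.1 g z.2 - speedUp s₀ g z.2‖ := by
    unfold speedUp; fun_prop
  have hev : ∀ᶠ s in 𝓝 s₀, ∀ t ∈ Icc 0 T, ‖speedUp s g t - speedUp s₀ g t‖ < δ := by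
    refine isCompact_Icc.eventually_forall_of_forall_eventually fun t _ => ?_
    exact (hcont.tendsto (s₀, t)).eventually_lt_const (by simpa using hδ)
  filter_upwards [hev] with s hs
  refine (eLpNorm_le_of_ae_bound (C := δ) ?_).trans_lt hδε
  filter_upwards [ae_restrict_mem measurableSet_Ioc] with t ht
  exact (hs t (Ioc_subset_Icc_self ht)).le

lemma continuous_reparam_left (u : ControlSpace E T) : Continuous fun s => reparam s u := by
  refine continuous_iff_continuousAt.2 fun s₀ => EMetric.tendsto_nhds.2 fun ε hε => ?_
  obtain ⟨η, hη, hηε⟩ : ∃ η : ENNReal, η ≠ 0 ∧ 2 * η + η + 2 * η < ε := by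
    obtain ⟨η, h1, h2⟩ := ENNReal.exists_nnreal_pos_mul_lt (a := 5) (by simp) hε.ne'
    refine ⟨η, by simpa using h1.ne', ?_⟩
    convert h2 using 1
    ring
  have hu := memLp_zeroExtend u
  obtain ⟨g, -, hg, hgc, hgm⟩ := hu.exists_hasCompactSupport_eLpNorm_sub_le (by simp) hη
  filter_upwards [eventually_eLpNorm_speedUp_sub_lt hgc T s₀ hη] with s hs
  rw [reparam, reparam, Lp.edist_toLp_toLp]
  have hsplit : speedUp s (zeroExtend u) - speedUp s₀ (zeroExtend u) =
      (speedUp s (zeroExtend u) - speedUp s g) + (speedUp s g - speedUp s₀ g) +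
        (speedUp s₀ g - speedUp s₀ (zeroExtend u)) := by abel
  have hm (s : I) {h : ℝ → E} (hh : MemLp h 2 volume) :
      AEStronglyMeasurable (speedUp s h) (volume.restrict (Ioc (0 : ℝ) T)) :=
    (aestronglyMeasurable_speedUp s hh.1).restrict
  have h1 : eLpNorm (speedUp s (zeroExtend u) - speedUp s g) 2
      (volume.restrict (Ioc (0 : ℝ) T)) ≤ 2 * η :=
    (eLpNorm_mono_measure _ Measure.restrict_le_self).trans
      ((eLpNorm_speedUp_sub_speedUp_le s hu.1 hgm.1).trans (by gcongr))
  have h2 : eLpNorm (speedUp s₀ g - speedUp s₀ (zeroExtend u)) 2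
      (volume.restrict (Ioc (0 : ℝ) T)) ≤ 2 * η := by
    rw [eLpNorm_sub_comm]
    exact (eLpNorm_mono_measure _ Measure.restrict_le_self).trans
      ((eLpNorm_speedUp_sub_speedUp_le s₀ hu.1 hgm.1).trans (by gcongr))
  rw [hsplit]
  refine (eLpNorm_add_le (((hm s hu).sub (hm s hgm)).add ((hm s hgm).sub (hm s₀ hgm)))
    ((hm s₀ hgm).sub (hm s₀ hu)) (by norm_num)).trans_lt ?_
  refine lt_of_le_of_lt (add_le_add ((eLpNorm_add_le ((hm s hu).sub (hm s hgm))
    ((hm s hgm).sub (hm s₀ hgm)) (by norm_num)).trans (add_le_add h1 hs.le)) h2) hηε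

lemma continuous_reparam :
    Continuous fun z : I × ControlSpace E T => reparam z.1 z.2 :=
  continuous_prod_of_continuous_lipschitzWith' _ 2 lipschitzWith_reparam continuous_reparam_left

end Reparametrization

section Area

variable {E : Type*} [NormedAddCommGroup E] {T : ℝ}

lemma IntervalIntegrable.subinterval {u : ℝ → E} (hu : IntervalIntegrable u volume 0 T) {t : ℝ}
    (ht : t ∈ Icc 0 T) : IntervalIntegrable u volume 0 t :=
  hu.mono_set (by
    rw [uIcc_of_le ht.1, uIcc_of_le (ht.1.trans ht.2)]; exact Icc_subset_Icc_right ht.2)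

lemma zeroExtend_of_lt (u : ControlSpace E T) {t : ℝ} (ht : T < t) : zeroExtend u t = 0 :=
  indicator_of_notMem (fun h => ht.not_ge h.2) _

lemma intervalIntegrable_control (hT : 0 ≤ T) (u : ControlSpace E T) :
    IntervalIntegrable u volume 0 T :=
  (intervalIntegrable_iff_integrableOn_Ioc_of_le hT).2 ((Lp.memLp u).integrable (by norm_num))

variable [NormedSpace ℝ E]

/-- The bilinear area functional `∫₀ᵀ β (∫₀ᵗ u) (v t) dt`. -/
noncomputable def area (T : ℝ) (β : E →L[ℝ] E →L[ℝ] ℝ) (u v : ℝ → E) : ℝ :=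
  ∫ t in (0 : ℝ)..T, β (∫ s in (0 : ℝ)..t, u s) (v t)

lemma integral_congr_of_ae_restrict {F : Type*} [NormedAddCommGroup F] [NormedSpace ℝ F]
    {u v : ℝ → F} (h : u =ᵐ[volume.restrict (Ioc (0 : ℝ) T)] v) {t : ℝ} (ht : t ∈ Icc 0 T) :
    ∫ s in (0 : ℝ)..t, u s = ∫ s in (0 : ℝ)..t, v s := by
  rw [intervalIntegral.integral_of_le ht.1, intervalIntegral.integral_of_le ht.1]
  exact integral_congr_ae (ae_restrict_of_ae_restrict_of_subset (Ioc_subset_Ioc_right ht.2) h)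

lemma area_congr (hT : 0 ≤ T) (β : E →L[ℝ] E →L[ℝ] ℝ) {u u' v v' : ℝ → E}
    (hu : u =ᵐ[volume.restrict (Ioc (0 : ℝ) T)] u')
    (hv : v =ᵐ[volume.restrict (Ioc (0 : ℝ) T)] v') : area T β u v = area T β u' v' := by
  refine integral_congr_of_ae_restrict (T := T) ?_ (right_mem_Icc.2 hT)
  filter_upwards [hv, ae_restrict_mem measurableSet_Ioc] with t ht htm
  rw [ht, integral_congr_of_ae_restrict hu (Ioc_subset_Icc_self htm)]

lemma norm_primitive_le {u : ℝ → E} (hu : IntervalIntegrable u volume 0 T) {t : ℝ}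
    (ht : t ∈ Icc 0 T) : ‖∫ s in (0 : ℝ)..t, u s‖ ≤ ∫ s in (0 : ℝ)..T, ‖u s‖ :=
  (intervalIntegral.norm_integral_le_integral_norm ht.1).trans <|
    intervalIntegral.integral_mono_interval le_rfl ht.1 ht.2
      (Eventually.of_forall fun _ => norm_nonneg _) hu.norm

lemma intervalIntegrable_area (hT : 0 ≤ T) (β : E →L[ℝ] E →L[ℝ] ℝ) {u v : ℝ → E}
    (hu : IntervalIntegrable u volume 0 T) (hv : IntervalIntegrable v volume 0 T) :
    IntervalIntegrable (fun t => β (∫ s in (0 : ℝ)..t, u s) (v t)) volume 0 T := by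
  rw [intervalIntegrable_iff_integrableOn_Ioc_of_le hT] at hv ⊢
  have hU : AEStronglyMeasurable (fun t => ∫ s in (0 : ℝ)..t, u s)
      (volume.restrict (Ioc (0 : ℝ) T)) := by
    refine ((intervalIntegral.continuousOn_primitive_interval ?_).mono
      (Ioc_subset_Icc_self.trans_eq (uIcc_of_le hT).symm)).aestronglyMeasurable measurableSet_Ioc
    rwa [uIcc_of_le hT, ← intervalIntegrable_iff_integrableOn_Icc_of_le hT]
  refine (hv.norm.const_mul (‖β‖ * ∫ s in (0 : ℝ)..T, ‖u s‖)).mono'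
    (β.aestronglyMeasurable_comp₂ hU hv.1) ?_
  filter_upwards [ae_restrict_mem measurableSet_Ioc] with t ht
  refine (β.le_opNorm₂ _ _).trans ?_
  gcongr
  exact norm_primitive_le hu (Ioc_subset_Icc_self ht)

lemma abs_area_le (hT : 0 ≤ T) (β : E →L[ℝ] E →L[ℝ] ℝ) {u v : ℝ → E}
    (hu : IntervalIntegrable u volume 0 T) (hv : IntervalIntegrable v volume 0 T) :
    |area T β u v| ≤ ‖β‖ * (∫ s in (0 : ℝ)..T, ‖u s‖) * ∫ s in (0 : ℝ)..T, ‖v s‖ := by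
  rw [← intervalIntegral.integral_const_mul]
  refine (intervalIntegral.norm_integral_le_integral_norm (E := ℝ) hT).trans ?_
  refine intervalIntegral.integral_mono_on hT (intervalIntegrable_area hT β hu hv).norm
    (hv.norm.const_mul _) fun t ht => ?_
  refine (β.le_opNorm₂ _ _).trans ?_
  gcongr
  exact norm_primitive_le hu ht

lemma area_add_left (hT : 0 ≤ T) (β : E →L[ℝ] E →L[ℝ] ℝ) {u u' v : ℝ → E}
    (hu : IntervalIntegrable u volume 0 T) (hu' : IntervalIntegrable u' volume 0 T)
    (hv : IntervalIntegrable v volume 0 T) :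
    area T β (u + u') v = area T β u v + area T β u' v := by
  rw [area, area, area, ← intervalIntegral.integral_add (intervalIntegrable_area hT β hu hv)
    (intervalIntegrable_area hT β hu' hv)]
  refine intervalIntegral.integral_congr fun t ht => ?_
  rw [uIcc_of_le hT] at ht
  simp only [Pi.add_apply]
  rw [intervalIntegral.integral_add (hu.subinterval ht) (hu'.subinterval ht)]
  simp

lemma area_add_right (hT : 0 ≤ T) (β : E →L[ℝ] E →L[ℝ] ℝ) {u v v' : ℝ → E}
    (hu : IntervalIntegrable u volume 0 T) (hv : IntervalIntegrable v volume 0 T)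
    (hv' : IntervalIntegrable v' volume 0 T) :
    area T β u (v + v') = area T β u v + area T β u v' := by
  rw [area, area, area, ← intervalIntegral.integral_add (intervalIntegrable_area hT β hu hv)
    (intervalIntegrable_area hT β hu hv')]
  simp

lemma area_smul_left (β : E →L[ℝ] E →L[ℝ] ℝ) (c : ℝ) (u v : ℝ → E) :
    area T β (c • u) v = c * area T β u v := by
  simp [area, intervalIntegral.integral_smul]

lemma area_smul_right (β : E →L[ℝ] E →L[ℝ] ℝ) (c : ℝ) (u v : ℝ → E) :
    area T β u (c • v) = c * area T β u v := by
  simp [area]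

lemma area_add_self_of_consecutive [CompleteSpace E] {a : ℝ} (ha : a ∈ Icc 0 T)
    (β : E →L[ℝ] E →L[ℝ] ℝ) {u v : ℝ → E} (hu : IntervalIntegrable u volume 0 T)
    (hv : IntervalIntegrable v volume 0 T) (hu0 : ∀ t ∈ Ioc a T, u t = 0)
    (hv0 : ∀ t ∈ Ioc 0 a, v t = 0) (hvi : ∫ t in (0 : ℝ)..T, v t = 0) :
    area T β (u + v) (u + v) = area T β u u + area T β v v := by
  have hT : 0 ≤ T := ha.1.trans ha.2
  have huv : area T β u v = 0 := by
    have hcongr : area T β u v = ∫ t in (0 : ℝ)..T, β (∫ s in (0 : ℝ)..T, u s) (v t) := by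
      refine intervalIntegral.integral_congr_uIoo fun t ht => ?_
      rw [uIoo_of_le hT] at ht
      rcases le_or_gt t a with hta | hta
      · simp [hv0 t ⟨ht.1, hta⟩]
      · have hsub := hu.subinterval ⟨ht.1.le, ht.2.le⟩
        have htail : ∫ s in t..T, u s = 0 := by
          refine (intervalIntegral.integral_congr_uIoo (g := fun _ => (0 : E)) fun s hs => ?_).trans
            (by simp)
          rw [uIoo_of_le ht.2.le] at hs
          exact hu0 s ⟨hta.trans hs.1, hs.2.le⟩
        rw [← intervalIntegral.integral_add_adjacent_intervals hsub (hsub.symm.trans hu), htail,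
          add_zero]
    rw [hcongr, ContinuousLinearMap.intervalIntegral_comp_comm _ hv, hvi, map_zero]
  have hvu : area T β v u = 0 := by
    refine (intervalIntegral.integral_congr_uIoo (g := fun _ => (0 : ℝ)) fun t ht => ?_).trans
      (by simp)
    rw [uIoo_of_le hT] at ht
    rcases le_or_gt t a with hta | hta
    · have hhead : ∫ s in (0 : ℝ)..t, v s = 0 := by
        refine (intervalIntegral.integral_congr_uIoo (g := fun _ => (0 : E)) fun s hs => ?_).trans
          (by simp)
        rw [uIoo_of_le ht.1.le] at hs
        exact hv0 s ⟨hs.1, hs.2.le.trans hta⟩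
      simp [hhead]
    · simp [hu0 t ⟨hta, ht.2.le⟩]
  have huv' : IntervalIntegrable (u + v) volume 0 T := hu.add hv
  rw [area_add_left hT β hu hv huv', area_add_right hT β hu hu hv,
    area_add_right hT β hv hu hv, huv, hvu]
  ring

lemma integral_eq_of_eq_zero {F : Type*} [NormedAddCommGroup F] [NormedSpace ℝ F] {S : ℝ}
    (hT : 0 ≤ T) (hTS : T ≤ S) {φ : ℝ → F} (hφ : ∀ t, T < t → φ t = 0) :
    ∫ t in (0 : ℝ)..S, φ t = ∫ t in (0 : ℝ)..T, φ t := by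
  rw [intervalIntegral.integral_of_le hT, intervalIntegral.integral_of_le (hT.trans hTS)]
  refine setIntegral_eq_of_subset_of_forall_sdiff_eq_zero measurableSet_Ioc
    (Ioc_subset_Ioc_right hTS) fun t ht => hφ t ?_
  by_contra! h
  exact ht.2 ⟨ht.1.1, h⟩

lemma integral_speedUp (s : I) (h : ℝ → E) (t : ℝ) :
    ∫ x in (0 : ℝ)..t, speedUp s h x = ∫ x in (0 : ℝ)..(1 + s) * t, h x := by
  simp [speedUp, intervalIntegral.integral_smul]

lemma area_speedUp (s : I) (β : E →L[ℝ] E →L[ℝ] ℝ) (h k : ℝ → E) :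
    area T β (speedUp s h) (speedUp s k) = area ((1 + s) * T) β h k := by
  simp only [area, integral_speedUp]
  rw [← integral_speedUp s (fun x => β (∫ y in (0 : ℝ)..x, h y) (k x))]
  simp [speedUp]

lemma le_one_add_mul (hT : 0 ≤ T) (s : I) : T ≤ (1 + s) * T := by
  nlinarith [s.2.1]

lemma integral_reparam (hT : 0 ≤ T) (s : I) (u : ControlSpace E T) :
    ∫ t in (0 : ℝ)..T, reparam s u t = ∫ t in (0 : ℝ)..T, u t := by
  have hTT : T ∈ Icc 0 T := right_mem_Icc.2 hT
  rw [integral_congr_of_ae_restrict (reparam_ae_eq s u) hTT, integral_speedUp,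
    integral_eq_of_eq_zero hT (le_one_add_mul hT s) fun t ht => zeroExtend_of_lt u ht,
    integral_congr_of_ae_restrict (zeroExtend_ae_eq u) hTT]

lemma area_reparam (hT : 0 ≤ T) (s : I) (β : E →L[ℝ] E →L[ℝ] ℝ) (u : ControlSpace E T) :
    area T β (reparam s u) (reparam s u) = area T β u u := by
  rw [area_congr hT β (reparam_ae_eq s u) (reparam_ae_eq s u), area_speedUp,
    ← area_congr hT β (zeroExtend_ae_eq u) (zeroExtend_ae_eq u)]
  exact integral_eq_of_eq_zero hT (le_one_add_mul hT s) fun t ht => by simp [zeroExtend_of_lt u ht]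

lemma exists_integral_norm_le (E : Type*) [NormedAddCommGroup E] (hT : 0 ≤ T) : ∃ C : ℝ, 0 ≤ C ∧
    ∀ u : ControlSpace E T, ∫ t in (0 : ℝ)..T, ‖u t‖ ≤ C * ‖u‖ := by
  set μ := volume.restrict (Ioc (0 : ℝ) T)
  refine ⟨(μ univ ^ (1 / (1 : ENNReal).toReal - 1 / (2 : ENNReal).toReal)).toReal,
    ENNReal.toReal_nonneg, fun u => ?_⟩
  have hle := eLpNorm_le_eLpNorm_mul_rpow_measure_univ (p := 1) (q := 2) (μ := μ) (by norm_num)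
    (Lp.aestronglyMeasurable u)
  rw [intervalIntegral.integral_of_le hT,
    integral_norm_eq_lintegral_enorm (Lp.aestronglyMeasurable u), ← eLpNorm_one_eq_lintegral_enorm,
    Lp.norm_def, mul_comm, ← ENNReal.toReal_mul]
  exact ENNReal.toReal_mono (ENNReal.mul_ne_top (Lp.eLpNorm_ne_top u)
    (ENNReal.rpow_ne_top_of_nonneg (by norm_num) (measure_ne_top _ _))) hle

/-- The total displacement `∫₀ᵀ u` as a linear map of the control. -/
noncomputable def displacement (hT : 0 ≤ T) : ControlSpace E T →ₗ[ℝ] E where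
  toFun u := ∫ t in (0 : ℝ)..T, u t
  map_add' u v := by
    rw [integral_congr_of_ae_restrict (Lp.coeFn_add u v) (right_mem_Icc.2 hT)]
    exact intervalIntegral.integral_add (intervalIntegrable_control hT u)
      (intervalIntegrable_control hT v)
  map_smul' c u := by
    rw [integral_congr_of_ae_restrict (Lp.coeFn_smul c u) (right_mem_Icc.2 hT)]
    exact intervalIntegral.integral_smul _ _

lemma continuous_displacement (hT : 0 ≤ T) :
    Continuous (displacement hT : ControlSpace E T → E) := by
  obtain ⟨C, -, hC⟩ := exists_integral_norm_le E hT
  exact ((displacement hT).mkContinuous C fun u =>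
    (intervalIntegral.norm_integral_le_integral_norm hT).trans (hC u)).continuous

lemma continuous_area_control (hT : 0 ≤ T) (β : E →L[ℝ] E →L[ℝ] ℝ) :
    Continuous fun u : ControlSpace E T => area T β u u := by
  obtain ⟨C, hC0, hC⟩ := exists_integral_norm_le E hT
  have hi := intervalIntegrable_control (E := E) hT
  let B : ControlSpace E T →ₗ[ℝ] ControlSpace E T →ₗ[ℝ] ℝ :=
    LinearMap.mk₂ ℝ (fun u v => area T β u v)
      (fun u u' v => by
        rw [area_congr hT β (Lp.coeFn_add u u') .rfl, area_add_left hT β (hi u) (hi u') (hi v)])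
      (fun c u v => by rw [area_congr hT β (Lp.coeFn_smul c u) .rfl, area_smul_left, smul_eq_mul])
      (fun u v v' => by
        rw [area_congr hT β .rfl (Lp.coeFn_add v v'), area_add_right hT β (hi u) (hi v) (hi v')])
      (fun c u v => by rw [area_congr hT β .rfl (Lp.coeFn_smul c v), area_smul_right, smul_eq_mul])
  let B' := B.mkContinuous₂ (‖β‖ * C * C) fun u v => by
    refine (abs_area_le hT β (hi u) (hi v)).trans ?_
    calc ‖β‖ * (∫ s in (0 : ℝ)..T, ‖u s‖) * ∫ s in (0 : ℝ)..T, ‖v s‖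
        ≤ ‖β‖ * (C * ‖u‖) * (C * ‖v‖) := by
          gcongr
          · exact intervalIntegral.integral_nonneg hT fun _ _ => norm_nonneg _
          · exact hC u
          · exact hC v
      _ = ‖β‖ * C * C * ‖u‖ * ‖v‖ := by ring
  change Continuous fun u => B' u u
  fun_prop

end Area

section Loops

variable {E : Type*} [NormedAddCommGroup E]

lemma intervalIntegrable_of_memLp_two {f : ℝ → E}
    (hf : MemLp f 2 (volume.restrict (Ioc (0 : ℝ) (2 * π)))) :
    IntervalIntegrable f volume 0 (2 * π) :=
  (intervalIntegrable_iff_integrableOn_Ioc_of_le two_pi_pos.le).2 (hf.integrable (by norm_num))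

variable [NormedSpace ℝ E]

/-- The control of an elliptic loop spanned by `x` and `y` and run during `(π, 2π]`. -/
noncomputable def loop (x y : E) : ℝ → E :=
  (Ioc π (2 * π)).indicator fun t => cos (2 * t) • x + sin (2 * t) • y

lemma memLp_loop (x y : E) :
    MemLp (loop x y) 2 (volume.restrict (Ioc (0 : ℝ) (2 * π))) := by
  have hcont : Continuous fun t : ℝ => cos (2 * t) • x + sin (2 * t) • y := by fun_prop
  have hmeas : AEStronglyMeasurable (loop x y) (volume.restrict (Ioc (0 : ℝ) (2 * π))) :=
    hcont.aestronglyMeasurable.indicator measurableSet_Ioc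
  refine MemLp.of_bound hmeas (‖x‖ + ‖y‖) (Eventually.of_forall fun t => ?_)
  refine (norm_indicator_le_norm_self _ _).trans ((norm_add_le _ _).trans ?_)
  rw [norm_smul, norm_smul]
  exact add_le_add (mul_le_of_le_one_left (norm_nonneg _) (abs_cos_le_one _))
    (mul_le_of_le_one_left (norm_nonneg _) (abs_sin_le_one _))

lemma integral_indicator_Ioc_pi {F : Type*} [NormedAddCommGroup F] [NormedSpace ℝ F] {t : ℝ}
    (ht : t ∈ Icc π (2 * π)) (k : ℝ → F) :
    ∫ s in (0 : ℝ)..t, (Ioc π (2 * π)).indicator k s = ∫ s in π..t, k s := by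
  rw [intervalIntegral.integral_of_le (pi_pos.le.trans ht.1), intervalIntegral.integral_of_le ht.1,
    setIntegral_indicator measurableSet_Ioc, Ioc_inter_Ioc, max_eq_right pi_pos.le,
    min_eq_left ht.2]

lemma integral_loop [CompleteSpace E] (x y : E) {t : ℝ} (ht : t ∈ Icc π (2 * π)) :
    ∫ s in (0 : ℝ)..t, loop x y s = (sin (2 * t) / 2) • x + ((1 - cos (2 * t)) / 2) • y := by
  have hx : Continuous fun t : ℝ => cos (2 * t) • x := by fun_prop
  have hy : Continuous fun t : ℝ => sin (2 * t) • y := by fun_prop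
  rw [loop, integral_indicator_Ioc_pi ht,
    intervalIntegral.integral_add (hx.intervalIntegrable _ _) (hy.intervalIntegrable _ _),
    intervalIntegral.integral_smul_const, intervalIntegral.integral_smul_const]
  congr 2
  · simp; ring
  · simp; ring

lemma integral_loop_eq_zero [CompleteSpace E] (x y : E) :
    ∫ s in (0 : ℝ)..(2 * π), loop x y s = 0 := by
  have h : cos (2 * (2 * π)) = 1 := by simpa using cos_nat_mul_two_pi 2
  have h' : sin (2 * (2 * π)) = 0 := by
    rw [← mul_assoc]; exact_mod_cast sin_nat_mul_pi (2 * 2)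
  rw [integral_loop x y ⟨by linarith [pi_pos], le_rfl⟩, h, h']
  simp

lemma area_loop [CompleteSpace E] {β : E →L[ℝ] E →L[ℝ] ℝ} (hβ : ∀ x, β x x = 0) (x y : E) :
    area (2 * π) β (loop x y) (loop x y) = π / 2 * β x y := by
  have hyx : β y x = -β x y := by
    have := hβ (x + y)
    simp only [map_add, _root_.add_apply, hβ] at this
    linarith
  have hcongr : area (2 * π) β (loop x y) (loop x y) = ∫ t in (0 : ℝ)..(2 * π),
      (Ioc π (2 * π)).indicator (fun t => (1 - cos (2 * t)) / 2 * β x y) t := by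
    refine intervalIntegral.integral_congr fun t _ => ?_
    by_cases ht : t ∈ Ioc π (2 * π)
    · simp only [integral_loop x y (Ioc_subset_Icc_self ht)]
      simp only [loop, indicator_of_mem ht, map_add, map_smul, _root_.add_apply,
        _root_.smul_apply, smul_eq_mul, hβ, hyx]
      linear_combination (β x y / 2) * sin_sq_add_cos_sq (2 * t)
    · simp [loop, indicator_of_notMem ht]
  rw [hcongr, integral_indicator_Ioc_pi ⟨by linarith [pi_pos], le_rfl⟩,
    intervalIntegral.integral_mul_const]
  congr 1
  have h : sin (2 * (2 * π)) = 0 := by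
    rw [← mul_assoc]; exact_mod_cast sin_nat_mul_pi (2 * 2)
  have hi : IntervalIntegrable (fun t => cos (2 * t)) volume π (2 * π) :=
    Continuous.intervalIntegrable (by fun_prop) _ _
  rw [intervalIntegral.integral_div, intervalIntegral.integral_sub (by simp) hi]
  simp [h]
  ring

/-- The loop control as an element of the control space. -/
noncomputable def loopControl (x y : E) : ControlSpace E (2 * π) := (memLp_loop x y).toLp

/-- Run `w` at double speed, then a loop in the plane of `x` and `y` with signed area
proportional to `r`. -/
noncomputable def appendLoop (x y : E) (r : ℝ) (w : ControlSpace E (2 * π)) :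
    ControlSpace E (2 * π) :=
  reparam 1 w + ((√r + √(-r)) • loopControl x 0 + (√r - √(-r)) • loopControl 0 y)

lemma continuous_appendLoop (x y : E) :
    Continuous fun z : ℝ × ControlSpace E (2 * π) => appendLoop x y z.1 z.2 := by
  have h : Continuous fun z : ℝ × ControlSpace E (2 * π) => reparam 1 z.2 :=
    (lipschitzWith_reparam 1).continuous.comp continuous_snd
  unfold appendLoop
  fun_prop

lemma appendLoop_zero (x y : E) (w : ControlSpace E (2 * π)) :
    appendLoop x y 0 w = reparam 1 w := by
  simp [appendLoop]

lemma appendLoop_ae_eq (x y : E) (r : ℝ) (w : ControlSpace E (2 * π)) :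
    appendLoop x y r w =ᵐ[volume.restrict (Ioc (0 : ℝ) (2 * π))]
      speedUp 1 (zeroExtend w) + loop ((√r + √(-r)) • x) ((√r - √(-r)) • y) := by
  have hx := (memLp_loop x 0).coeFn_toLp
  have hy := (memLp_loop 0 y).coeFn_toLp
  filter_upwards [reparam_ae_eq 1 w, hx, hy, Lp.coeFn_add (reparam 1 w)
      ((√r + √(-r)) • loopControl x 0 + (√r - √(-r)) • loopControl 0 y),
    Lp.coeFn_add ((√r + √(-r)) • loopControl x 0) ((√r - √(-r)) • loopControl 0 y),
    Lp.coeFn_smul (√r + √(-r)) (loopControl x 0),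
    Lp.coeFn_smul (√r - √(-r)) (loopControl 0 y)] with t h1 h2 h3 h4 h5 h6 h7
  rw [appendLoop, h4, Pi.add_apply, Pi.add_apply, h5, Pi.add_apply, h6, h7, h1, Pi.smul_apply,
    Pi.smul_apply, loopControl, loopControl, h2, h3]
  congr 1
  by_cases ht : t ∈ Ioc π (2 * π)
  · simp only [loop, indicator_of_mem ht, smul_zero, add_zero, zero_add, smul_comm (cos _),
      smul_comm (sin _)]
  · simp [loop, indicator_of_notMem ht]

lemma sqrt_add_mul_sqrt_sub (r : ℝ) : (√r + √(-r)) * (√r - √(-r)) = r := by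
  rcases le_total 0 r with hr | hr
  · rw [sqrt_eq_zero_of_nonpos (by linarith : -r ≤ 0)]
    simp [mul_self_sqrt hr]
  · rw [sqrt_eq_zero_of_nonpos hr]
    simp [mul_self_sqrt (by linarith : 0 ≤ -r)]

lemma intervalIntegrable_speedUp_zeroExtend (w : ControlSpace E (2 * π)) :
    IntervalIntegrable (speedUp 1 (zeroExtend w)) volume 0 (2 * π) :=
  intervalIntegrable_of_memLp_two ((memLp_speedUp 1 (memLp_zeroExtend w)).restrict _)

lemma integral_appendLoop [CompleteSpace E] (x y : E) (r : ℝ) (w : ControlSpace E (2 * π)) :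
    ∫ t in (0 : ℝ)..(2 * π), appendLoop x y r w t = ∫ t in (0 : ℝ)..(2 * π), w t := by
  have hTT : 2 * π ∈ Icc 0 (2 * π) := right_mem_Icc.2 two_pi_pos.le
  rw [integral_congr_of_ae_restrict (appendLoop_ae_eq x y r w) hTT]
  simp only [Pi.add_apply]
  rw [intervalIntegral.integral_add (intervalIntegrable_speedUp_zeroExtend w)
      (intervalIntegrable_of_memLp_two (memLp_loop _ _)), integral_loop_eq_zero, add_zero,
    ← integral_congr_of_ae_restrict (reparam_ae_eq 1 w) hTT, integral_reparam two_pi_pos.le]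

lemma area_appendLoop [CompleteSpace E] {β : E →L[ℝ] E →L[ℝ] ℝ} (hβ : ∀ x, β x x = 0) (x y : E)
    (r : ℝ) (w : ControlSpace E (2 * π)) :
    area (2 * π) β (appendLoop x y r w) (appendLoop x y r w) =
      area (2 * π) β w w + π / 2 * (r * β x y) := by
  have hT : 0 ≤ 2 * π := two_pi_pos.le
  have hae := appendLoop_ae_eq x y r w
  rw [area_congr hT β hae hae, area_add_self_of_consecutive (a := π)
      ⟨pi_pos.le, by linarith [pi_pos]⟩ β (intervalIntegrable_speedUp_zeroExtend w)
      (intervalIntegrable_of_memLp_two (memLp_loop _ _)) ?_ ?_ (integral_loop_eq_zero _ _),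
    area_loop hβ, ← area_congr hT β (reparam_ae_eq 1 w) (reparam_ae_eq 1 w), area_reparam hT]
  · simp only [map_smul, _root_.smul_apply, smul_eq_mul]
    linear_combination (π / 2 * β x y) * sqrt_add_mul_sqrt_sub r
  · intro t ht
    rw [speedUp, zeroExtend_of_lt w, smul_zero]
    norm_num
    linarith [ht.1]
  · intro t ht
    exact indicator_of_notMem (fun h => h.1.not_ge ht.2) _

end Loops

section Endpoint

variable {E ι κ : Type*} [NormedAddCommGroup E] [NormedSpace ℝ E]

/-- The endpoint map of the step-two Carnot group with bracket components `β i`. -/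
noncomputable def endpoint (β : ι → E →L[ℝ] E →L[ℝ] ℝ) (u : ControlSpace E (2 * π)) :
    E × (ι → ℝ) :=
  (displacement two_pi_pos.le u, fun i => 1 / 2 * area (2 * π) (β i) u u)

lemma continuous_endpoint (β : ι → E →L[ℝ] E →L[ℝ] ℝ) : Continuous (endpoint β) :=
  (continuous_displacement _).prodMk <| continuous_pi fun i =>
    continuous_const.mul (continuous_area_control two_pi_pos.le (β i))

lemma endpoint_reparam (β : ι → E →L[ℝ] E →L[ℝ] ℝ) (s : I) (u : ControlSpace E (2 * π)) :
    endpoint β (reparam s u) = endpoint β u := by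
  refine Prod.ext (integral_reparam two_pi_pos.le s u) (funext fun i => ?_)
  simp only [endpoint, area_reparam two_pi_pos.le]

lemma endpoint_appendLoop [CompleteSpace E] {β : ι → E →L[ℝ] E →L[ℝ] ℝ}
    (hβ : ∀ i x, β i x x = 0) (x y : E) (r : ℝ) (w : ControlSpace E (2 * π)) :
    endpoint β (appendLoop x y (4 / π * r) w) = endpoint β w + (0, fun i => r * β i x y) := by
  refine Prod.ext ?_ (funext fun i => ?_)
  · rw [Prod.fst_add, add_zero]
    exact integral_appendLoop x y (4 / π * r) w
  · simp only [endpoint, area_appendLoop (hβ i), Prod.snd_add, Pi.add_apply]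
    field_simp
    ring

/-- Append successively the loops indexed by the members of a list. -/
noncomputable def appendLoops (x y : κ → E) (r : κ → ℝ) :
    List κ → ControlSpace E (2 * π) → ControlSpace E (2 * π)
  | [], w => w
  | k :: L, w => appendLoop (x k) (y k) (4 / π * r k) (appendLoops x y r L w)

lemma continuous_appendLoops (x y : κ → E) (L : List κ) :
    Continuous fun z : (κ → ℝ) × ControlSpace E (2 * π) => appendLoops x y z.1 L z.2 := by
  induction L with
  | nil => exact continuous_snd
  | cons k L ih =>
    have hr : Continuous fun z : (κ → ℝ) × ControlSpace E (2 * π) => 4 / π * z.1 k := by fun_prop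
    simp only [appendLoops]
    exact (continuous_appendLoop (x k) (y k)).comp
      (f := fun z : (κ → ℝ) × ControlSpace E (2 * π) =>
        (4 / π * z.1 k, appendLoops x y z.1 L z.2)) (hr.prodMk ih)

lemma endpoint_appendLoops [CompleteSpace E] {β : ι → E →L[ℝ] E →L[ℝ] ℝ}
    (hβ : ∀ i x, β i x x = 0) (x y : κ → E) (r : κ → ℝ) (L : List κ)
    (w : ControlSpace E (2 * π)) :
    endpoint β (appendLoops x y r L w) =
      endpoint β w + (0, fun i => (L.map fun k => r k * β i (x k) (y k)).sum) := by
  induction L with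
  | nil => exact Prod.ext (by simp [appendLoops]) (by ext; simp [appendLoops])
  | cons k L ih =>
    rw [appendLoops, endpoint_appendLoop hβ, ih]
    refine Prod.ext (by simp) (funext fun i => ?_)
    simp only [Prod.snd_add, Pi.add_apply, List.map_cons, List.sum_cons]
    ring

lemma appendLoops_zero (x y : κ → E) (L : List κ) (w : ControlSpace E (2 * π)) :
    appendLoops x y 0 L w = (reparam 1)^[L.length] w := by
  induction L with
  | nil => rfl
  | cons k L ih =>
    rw [appendLoops, ih, Pi.zero_apply, mul_zero, appendLoop_zero, List.length_cons,
      Function.iterate_succ_apply']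

/-- The reparametrization at double speed, as a self-map of a fibre of the endpoint map. -/
noncomputable def reparamFiber (β : ι → E →L[ℝ] E →L[ℝ] ℝ) (p : E × (ι → ℝ)) :
    C({u // endpoint β u = p}, {u // endpoint β u = p}) where
  toFun u := ⟨reparam 1 u.1, (endpoint_reparam β 1 u.1).trans u.2⟩
  continuous_toFun :=
    ((lipschitzWith_reparam 1).continuous.comp continuous_subtype_val).subtype_mk _

lemma id_homotopic_reparamFiber (β : ι → E →L[ℝ] E →L[ℝ] ℝ) (p : E × (ι → ℝ)) :
    (ContinuousMap.id _).Homotopic (reparamFiber β p) :=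
  ⟨{ toFun := fun z => ⟨reparam z.1 z.2.1, (endpoint_reparam β z.1 z.2.1).trans z.2.2⟩
     continuous_toFun := (continuous_reparam.comp
       (continuous_fst.prodMk (continuous_subtype_val.comp continuous_snd))).subtype_mk _
     map_zero_left := fun u => Subtype.ext (reparam_zero u.1)
     map_one_left := fun _ => rfl }⟩

lemma exists_homotopic_id_iterate_reparam (β : ι → E →L[ℝ] E →L[ℝ] ℝ) (p : E × (ι → ℝ)) (n : ℕ) :
    ∃ f : C({u // endpoint β u = p}, {u // endpoint β u = p}),
      (ContinuousMap.id _).Homotopic f ∧ ∀ u, (f u).1 = (reparam 1)^[n] u.1 := by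
  induction n with
  | zero => exact ⟨ContinuousMap.id _, .refl _, fun _ => rfl⟩
  | succ n ih =>
    obtain ⟨f, hf, hfu⟩ := ih
    refine ⟨(reparamFiber β p).comp f, (id_homotopic_reparamFiber β p).comp hf, fun u => ?_⟩
    rw [Function.iterate_succ_apply', ← hfu]
    rfl

theorem contractibleSpace_endpoint_fiber [CompleteSpace E] [Fintype κ]
    {β : ι → E →L[ℝ] E →L[ℝ] ℝ} (hβ : ∀ i x, β i x x = 0) (x y : κ → E)
    {ρ : (ι → ℝ) → κ → ℝ} (hρ : Continuous ρ) (hρ0 : ρ 0 = 0)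
    (hρβ : ∀ z i, ∑ k, ρ z k * β i (x k) (y k) = z i) (p : E × (ι → ℝ)) :
    ContractibleSpace {u // endpoint β u = p} := by
  set L : List κ := Finset.univ.toList
  let u₀ : ControlSpace E (2 * π) := Lp.const 2 _ ((2 * π)⁻¹ • p.1)
  have hu₀ : displacement two_pi_pos.le u₀ = p.1 := by
    change ∫ t in (0 : ℝ)..(2 * π), u₀ t = p.1
    rw [integral_congr_of_ae_restrict (Lp.coeFn_const ..) (right_mem_Icc.2 two_pi_pos.le)]
    simp only [Function.const_apply, intervalIntegral.integral_const, sub_zero]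
    rw [smul_inv_smul₀ two_pi_pos.ne']
  let correct (w : ControlSpace E (2 * π)) : ControlSpace E (2 * π) :=
    appendLoops x y (ρ (p.2 - (endpoint β w).2)) L w
  have hcorrect : Continuous correct :=
    (continuous_appendLoops x y L).comp ((hρ.comp (continuous_const.sub
      (continuous_snd.comp (continuous_endpoint β)))).prodMk continuous_id)
  have hendpoint {w : ControlSpace E (2 * π)} (hw : displacement two_pi_pos.le w = p.1) :
      endpoint β (correct w) = p := by
    simp only [correct]
    rw [endpoint_appendLoops hβ]
    refine Prod.ext (by simpa [endpoint] using hw) (funext fun i => ?_)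
    simp [L, Finset.sum_map_toList, hρβ]
  have hline (s : I) (u : {u // endpoint β u = p}) :
      displacement two_pi_pos.le ((1 - s : ℝ) • u.1 + (s : ℝ) • u₀) = p.1 := by
    have hu : displacement two_pi_pos.le u.1 = p.1 := congrArg Prod.fst u.2
    rw [map_add, map_smul, map_smul, hu, hu₀, ← add_smul]
    simp
  obtain ⟨f, hf, hfu⟩ := exists_homotopic_id_iterate_reparam β p L.length
  rw [contractible_iff_id_nullhomotopic]
  refine ⟨⟨correct u₀, hendpoint hu₀⟩, hf.trans ⟨?_⟩⟩
  exact
    { toFun := fun z => ⟨correct ((1 - z.1 : ℝ) • z.2.1 + (z.1 : ℝ) • u₀), hendpoint (hline _ _)⟩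
      continuous_toFun := (hcorrect.comp (by fun_prop)).subtype_mk _
      map_zero_left := fun u => Subtype.ext <| by
        simp [correct, u.2, hρ0, appendLoops_zero, hfu]
      map_one_left := fun u => Subtype.ext <| by simp }

end Endpoint

lemma exists_coefficients_of_linearIndependent {d l : ℕ} {A : Fin l → Matrix (Fin d) (Fin d) ℝ}
    (hind : LinearIndependent ℝ A) :
    ∃ ρ : (Fin l → ℝ) → Fin d × Fin d → ℝ, Continuous ρ ∧ ρ 0 = 0 ∧
      ∀ z i, ∑ k, ρ z k * A i k.1 k.2 = z i := by
  obtain ⟨g, hg⟩ := LinearMap.exists_leftInverse_of_injective (Fintype.linearCombination ℝ A)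
    (LinearMap.ker_eq_bot.2 hind.fintypeLinearCombination_injective)
  have hgA (i : Fin l) : g (A i) = Pi.single i 1 := by
    simpa using LinearMap.congr_fun hg (Pi.single i 1)
  refine ⟨fun z k => ∑ j, z j * g (Matrix.single k.1 k.2 1) j, by fun_prop, ?_, fun z i => ?_⟩
  · ext; simp
  · have hsum (j : Fin l) : ∑ k : Fin d × Fin d, g (Matrix.single k.1 k.2 1) j * A i k.1 k.2 =
        (Pi.single i 1 : Fin l → ℝ) j := by
      rw [← hgA i]
      conv_rhs => rw [Matrix.matrix_eq_sum_single (A i)]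
      rw [Fintype.sum_prod_type, map_sum, Finset.sum_apply]
      refine Finset.sum_congr rfl fun a _ => ?_
      rw [map_sum, Finset.sum_apply]
      refine Finset.sum_congr rfl fun b _ => ?_
      rw [show Matrix.single a b (A i a b) = A i a b • Matrix.single a b (1 : ℝ) by
        simp [Matrix.smul_single], map_smul, Pi.smul_apply, smul_eq_mul, mul_comm]
    simp_rw [Finset.sum_mul, mul_assoc]
    rw [Finset.sum_comm]
    simp_rw [← Finset.mul_sum, hsum]
    simp [Pi.single_apply]

/-- The admissible-path spaces of a step-two Carnot group: the group is `ℝ^d ⊕ ℝ^l` with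
Carnot structure given by linearly independent skew-symmetric matrices `A₁,…,A_l`; admissible
paths starting at the identity are identified with their controls `u ∈ L²([0,2π], ℝ^d)`, and
the endpoint map is `F(u) = (∫₀^{2π} u, (1/2)∫₀^{2π} ⟨∫₀^t u, Aᵢ u(t)⟩ dt)`. Then for any two
points `p₁, p₂` the spaces `Ω_{p₁} = F⁻¹(p₁)` and `Ω_{p₂} = F⁻¹(p₂)` (with the `L²` topology)
are homotopy equivalent, and every `Ω_p` is contractible. -/
theorem stmt_15 (d l : ℕ) (A : Fin l → Matrix (Fin d) (Fin d) ℝ)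
    (hskew : ∀ i, (A i)ᵀ = -(A i)) (hind : LinearIndependent ℝ A) :
    ∀ F : (Lp (Fin d → ℝ) 2 (volume.restrict (Set.Ioc (0 : ℝ) (2 * π)))) →
        ((Fin d → ℝ) × (Fin l → ℝ)),
      (F = fun u =>
        ((∫ t in (0 : ℝ)..(2 * π), u t),
          fun i => (1 / 2) * ∫ t in (0 : ℝ)..(2 * π),
            (∫ s in (0 : ℝ)..t, u s) ⬝ᵥ (A i).mulVec (u t))) →
      (∀ p₁ p₂ : (Fin d → ℝ) × (Fin l → ℝ),
        Nonempty (ContinuousMap.HomotopyEquiv {u // F u = p₁} {u // F u = p₂})) ∧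
      (∀ p : (Fin d → ℝ) × (Fin l → ℝ), ContractibleSpace {u // F u = p}) := by
  rintro F rfl
  let β (i : Fin l) : (Fin d → ℝ) →L[ℝ] (Fin d → ℝ) →L[ℝ] ℝ :=
    (Matrix.toBilin' (A i)).toContinuousBilinearMap
  have hβ_apply (i : Fin l) (x y : Fin d → ℝ) : β i x y = x ⬝ᵥ (A i).mulVec y :=
    Matrix.toBilin'_apply' (A i) x y
  have hβ (i : Fin l) (x : Fin d → ℝ) : β i x x = 0 := by
    have h : x ⬝ᵥ (A i).mulVec x = -(x ⬝ᵥ (A i).mulVec x) := by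
      conv_lhs => rw [Matrix.dotProduct_mulVec, ← Matrix.mulVec_transpose, hskew i,
        Matrix.neg_mulVec, neg_dotProduct, dotProduct_comm]
    rw [hβ_apply]
    linarith
  obtain ⟨ρ, hρ, hρ0, hρA⟩ := exists_coefficients_of_linearIndependent hind
  have hcontr (p : (Fin d → ℝ) × (Fin l → ℝ)) : ContractibleSpace {u // endpoint β u = p} :=
    contractibleSpace_endpoint_fiber hβ (fun k : Fin d × Fin d => Pi.single k.1 1)
      (fun k => Pi.single k.2 1) hρ hρ0 (fun z i => by simp [hβ_apply, hρA]) p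
  have hF : (fun u : ControlSpace (Fin d → ℝ) (2 * π) =>
      ((∫ t in (0 : ℝ)..(2 * π), u t),
        fun i => (1 / 2) * ∫ t in (0 : ℝ)..(2 * π),
          (∫ s in (0 : ℝ)..t, u s) ⬝ᵥ (A i).mulVec (u t))) = endpoint β := by
    ext u : 1
    simp only [endpoint, area, hβ_apply]
    rfl
  rw [hF]
  exact ⟨fun p₁ p₂ => ContractibleSpace.hequiv _ _, hcontr⟩
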